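/- For any M > 0 the family S_h^M = {f ∈ S_h : ‖f‖_{L²(0,1)} ≤ M} is a normal family: every sequence in S_h^M has a subsequence converging uniformly on compact subsets of ℍ_h to an analytic function. -/

import Mathlib

/-!
Normality of `S_h^M` is a two-step argument.

*A priori bound.* Let `f = ρ + ∫ dσ(λ)/(λ - z²)` with `z = ω + ih`. For `ω = x ∈ (0,1)` the
arguments of the kernel values fill a sector of opening less than `π`, so a single real functional
detects them all: `Re + (x/h) Im` sends `(λ - z²)⁻¹` to `(λ + |z|²)/|λ - z²|² ≥ 1/(λ + |z|²)`
(`ker_lower`). Hence `|f(x)|` is bounded below, uniformly in `x ∈ (0,1)`, by a constant multiple of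
`ρ + ‖σ‖_*`, and the `L²(0,1)` bound becomes a bound on `ρ + ‖σ‖_*` (`data_le`).

*Compactness.* On the half-plane, `|λ - z²|⁻¹ ≤ kerWt h ω / (λ + 1)` with a continuous weight
(`norm_ker_le`), because `|λ - z²| ≥ (Im z)²` and `λ ≤ |λ - z²| + |z|²`. So the bound on
`ρ + ‖σ‖_*` gives a pointwise bound and an explicit modulus of continuity for the whole family.
Arzelà–Ascoli in `C(ℍ_h, ℂ)` (`isCompact_of_modulus`), whose compact-open topology is metrizable,
provides the subsequence, and a locally uniform limit of holomorphic functions is holomorphic.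
-/

open MeasureTheory Complex Filter Set Topology Asymptotics

noncomputable section

/-- The open half-plane `ℍ_h = {ω : ℂ | Im ω > -h}`. -/
def Hh (h : ℝ) : Set ℂ := {ω : ℂ | -h < ω.im}

/-- The Stieltjes-type integral `∫₀^∞ dσ(λ)/(λ - (ω+ih)²)`. -/
def sInt (h : ℝ) (σ : Measure ℝ) (ω : ℂ) : ℂ :=
  ∫ l in Ici (0:ℝ), ((l : ℂ) - (ω + I * (h:ℂ)) ^ 2)⁻¹ ∂σ

/-- Finiteness condition `∫₀^∞ dσ(λ)/(λ+1) < ∞`. -/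
def FinCond (σ : Measure ℝ) : Prop :=
  (∫⁻ l in Ici (0:ℝ), ENNReal.ofReal (1 / (l + 1)) ∂σ) < ⊤

/-- `‖σ‖_* = ∫₀^∞ dσ(λ)/(λ+1)`. -/
def starNorm (σ : Measure ℝ) : ℝ :=
  (∫⁻ l in Ici (0:ℝ), ENNReal.ofReal (1 / (l + 1)) ∂σ).toReal

/-- Membership in the class `S_h`: `f(ω) = ρ + ∫₀^∞ dσ(λ)/(λ - (ω+ih)²)` on `ℍ_h`
with `ρ ≥ 0` and `σ` a positive measure with `∫₀^∞ dσ(λ)/(λ+1) < ∞`. -/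
def MemS (h : ℝ) (f : ℂ → ℂ) : Prop :=
  ∃ (ρ : ℝ) (σ : Measure ℝ), 0 ≤ ρ ∧ FinCond σ ∧
    ∀ ω ∈ Hh h, f ω = (ρ : ℂ) + sInt h σ ω

/-- `L²(0,1)` norm of (the restriction to `(0,1)` of) `f`. -/
def L2norm01 (f : ℂ → ℂ) : ℝ := Real.sqrt (∫ x in Ioo (0:ℝ) 1, ‖f (x:ℂ)‖ ^ 2)

/-! ### Kernel bounds on the half-plane -/

/-- The growth weight at `ω`: with `z = ω + ih`, the kernel satisfies
`|λ - z²|⁻¹ ≤ kerWt h ω / (λ + 1)` for all `λ ≥ 0`. -/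
def kerWt (h : ℝ) (ω : ℂ) : ℝ := 1 + (‖ω + I * (h:ℂ)‖ ^ 2 + 1) / (ω.im + h) ^ 2

/-- A modulus of continuity for the kernel, hence (up to a constant) for the whole family. -/
def kerMod (h : ℝ) (ω w : ℂ) : ℝ :=
  ‖(ω + I * (h:ℂ)) ^ 2 - (w + I * (h:ℂ)) ^ 2‖ * (kerWt h ω * kerWt h w)

lemma kerWt_nonneg (h : ℝ) (ω : ℂ) : 0 ≤ kerWt h ω := by
  unfold kerWt; positivity

lemma isOpen_Hh (h : ℝ) : IsOpen (Hh h) := isOpen_lt continuous_const Complex.continuous_im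

lemma continuousOn_kerWt (h : ℝ) : ContinuousOn (kerWt h) (Hh h) := by
  unfold kerWt
  refine continuousOn_const.add (ContinuousOn.div (by fun_prop) (by fun_prop) ?_)
  intro ω hω
  have : 0 < ω.im + h := by have : -h < ω.im := hω; linarith
  positivity

/-- `|λ - z²| = |√λ - z| |√λ + z| ≥ (Im z)²`. -/
lemma im_sq_le_norm (h l : ℝ) (hl : 0 ≤ l) (ω : ℂ) :
    (ω.im + h) ^ 2 ≤ ‖(l : ℂ) - (ω + I * (h:ℂ)) ^ 2‖ := by
  have e : (l : ℂ) - (ω + I * (h:ℂ)) ^ 2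
      = ((√l : ℝ) - (ω + I * (h:ℂ))) * ((√l : ℝ) + (ω + I * (h:ℂ))) := by
    have : ((√l : ℝ) : ℂ) ^ 2 = l := by rw [← Complex.ofReal_pow, Real.sq_sqrt hl]
    rw [← this]; ring
  have h1 := Complex.abs_im_le_norm ((√l : ℝ) - (ω + I * (h:ℂ)))
  have h2 := Complex.abs_im_le_norm ((√l : ℝ) + (ω + I * (h:ℂ)))
  have e1 : ((√l : ℝ) - (ω + I * (h:ℂ))).im = -(ω.im + h) := by simp
  have e2 : ((√l : ℝ) + (ω + I * (h:ℂ))).im = ω.im + h := by simp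
  rw [e1, abs_neg] at h1
  rw [e2] at h2
  rw [e, norm_mul, ← sq_abs, sq]
  exact mul_le_mul h1 h2 (abs_nonneg _) (norm_nonneg _)

lemma ker_ne_zero {h l : ℝ} (hl : 0 ≤ l) {ω : ℂ} (hω : ω ∈ Hh h) :
    (l : ℂ) - (ω + I * (h:ℂ)) ^ 2 ≠ 0 := by
  have h1 := im_sq_le_norm h l hl ω
  have : 0 < ω.im + h := by have : -h < ω.im := hω; linarith
  rw [← norm_pos_iff]
  exact lt_of_lt_of_le (by positivity) h1

lemma norm_ker_le {h l : ℝ} (hl : 0 ≤ l) {ω : ℂ} (hω : ω ∈ Hh h) :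
    ‖((l : ℂ) - (ω + I * (h:ℂ)) ^ 2)⁻¹‖ ≤ kerWt h ω * (1 / (l + 1)) := by
  have h1 := im_sq_le_norm h l hl ω
  have h0 : 0 < ω.im + h := by have : -h < ω.im := hω; linarith
  have hs : 0 < (ω.im + h) ^ 2 := by positivity
  have hp := norm_pos_iff.2 (ker_ne_zero hl hω)
  have h2 : l ≤ ‖(l : ℂ) - (ω + I * (h:ℂ)) ^ 2‖ + ‖ω + I * (h:ℂ)‖ ^ 2 := by
    have := norm_add_le ((l : ℂ) - (ω + I * (h:ℂ)) ^ 2) ((ω + I * (h:ℂ)) ^ 2)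
    rw [sub_add_cancel, norm_pow, Complex.norm_real, Real.norm_of_nonneg hl] at this
    exact this
  have h3 : ‖ω + I * (h:ℂ)‖ ^ 2 + 1 ≤ (‖ω + I * (h:ℂ)‖ ^ 2 + 1) / (ω.im + h) ^ 2
      * ‖(l : ℂ) - (ω + I * (h:ℂ)) ^ 2‖ := by
    rw [div_mul_eq_mul_div, le_div_iff₀ hs]
    exact mul_le_mul_of_nonneg_left h1 (by positivity)
  rw [norm_inv, mul_one_div, le_div_iff₀ (by positivity), inv_mul_le_iff₀ hp]
  unfold kerWt
  linarith

/-! ### The Stieltjes integral: growth, modulus of continuity, holomorphy -/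

/-- The `λ`-integral `∫ dσ/(λ+1)` converges as a Bochner integral and computes `starNorm`. -/
lemma integrable_base {σ : Measure ℝ} (hσ : FinCond σ) :
    Integrable (fun l : ℝ => 1 / (l + 1)) (σ.restrict (Ici 0)) ∧
      ∫ l in Ici (0:ℝ), 1 / (l + 1) ∂σ = starNorm σ := by
  have hm : AEStronglyMeasurable (fun l : ℝ => 1 / (l + 1)) (σ.restrict (Ici 0)) :=
    (by fun_prop : Measurable (fun l : ℝ => 1 / (l + 1))).aestronglyMeasurable
  have hn : 0 ≤ᵐ[σ.restrict (Ici 0)] (fun l : ℝ => 1 / (l + 1)) := by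
    filter_upwards [ae_restrict_mem measurableSet_Ici] with l hl
    have : (0:ℝ) ≤ l := hl
    simp only [Pi.zero_apply]
    positivity
  refine ⟨⟨hm, ?_⟩, ?_⟩
  · rw [hasFiniteIntegral_iff_ofReal hn]; exact hσ
  · rw [integral_eq_lintegral_of_nonneg_ae hn hm]; rfl

lemma measurable_ker (h : ℝ) (ω : ℂ) :
    Measurable (fun l : ℝ => ((l : ℂ) - (ω + I * (h:ℂ)) ^ 2)⁻¹) := by fun_prop

lemma integrable_ker {h : ℝ} {σ : Measure ℝ} (hσ : FinCond σ) {ω : ℂ} (hω : ω ∈ Hh h) :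
    Integrable (fun l : ℝ => ((l : ℂ) - (ω + I * (h:ℂ)) ^ 2)⁻¹) (σ.restrict (Ici 0)) := by
  refine ((integrable_base hσ).1.const_mul (kerWt h ω)).mono'
    (measurable_ker h ω).aestronglyMeasurable ?_
  filter_upwards [ae_restrict_mem measurableSet_Ici] with l hl
  exact norm_ker_le hl hω

lemma norm_sInt_le {h : ℝ} {σ : Measure ℝ} (hσ : FinCond σ) {ω : ℂ} (hω : ω ∈ Hh h) :
    ‖sInt h σ ω‖ ≤ kerWt h ω * starNorm σ := by
  rw [← (integrable_base hσ).2, ← integral_const_mul]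
  refine norm_integral_le_of_norm_le ((integrable_base hσ).1.const_mul _) ?_
  filter_upwards [ae_restrict_mem measurableSet_Ici] with l hl
  exact norm_ker_le hl hω

lemma one_div_sq_le {l : ℝ} (hl : 0 ≤ l) : (1 / (l + 1)) * (1 / (l + 1)) ≤ 1 / (l + 1) := by
  have h1 : 1 / (l + 1) ≤ 1 := by rw [div_le_one (by positivity)]; linarith
  exact mul_le_of_le_one_left (by positivity) h1

lemma norm_sInt_sub_le {h : ℝ} {σ : Measure ℝ} (hσ : FinCond σ) {ω w : ℂ} (hω : ω ∈ Hh h)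
    (hw : w ∈ Hh h) : ‖sInt h σ ω - sInt h σ w‖ ≤ kerMod h ω w * starNorm σ := by
  unfold sInt
  rw [← integral_sub (integrable_ker hσ hω) (integrable_ker hσ hw),
    ← (integrable_base hσ).2, ← integral_const_mul]
  refine norm_integral_le_of_norm_le ((integrable_base hσ).1.const_mul _) ?_
  filter_upwards [ae_restrict_mem measurableSet_Ici] with l hl
  have hl : (0:ℝ) ≤ l := hl
  have e : ((l : ℂ) - (ω + I * (h:ℂ)) ^ 2)⁻¹ - ((l : ℂ) - (w + I * (h:ℂ)) ^ 2)⁻¹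
      = ((ω + I * (h:ℂ)) ^ 2 - (w + I * (h:ℂ)) ^ 2) *
        (((l : ℂ) - (ω + I * (h:ℂ)) ^ 2)⁻¹ * ((l : ℂ) - (w + I * (h:ℂ)) ^ 2)⁻¹) := by
    have := ker_ne_zero hl hω
    have := ker_ne_zero hl hw
    field_simp
    ring
  rw [e, norm_mul, norm_mul, kerMod, mul_assoc]
  refine mul_le_mul_of_nonneg_left ?_ (norm_nonneg _)
  calc _ ≤ (kerWt h ω * (1 / (l + 1))) * (kerWt h w * (1 / (l + 1))) :=
        mul_le_mul (norm_ker_le hl hω) (norm_ker_le hl hw) (norm_nonneg _)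
          (mul_nonneg (kerWt_nonneg _ _) (by positivity))
    _ = (kerWt h ω * kerWt h w) * ((1 / (l + 1)) * (1 / (l + 1))) := by ring
    _ ≤ _ := mul_le_mul_of_nonneg_left (one_div_sq_le hl)
          (mul_nonneg (kerWt_nonneg _ _) (kerWt_nonneg _ _))

lemma differentiableOn_sInt {h : ℝ} {σ : Measure ℝ} (hσ : FinCond σ) :
    DifferentiableOn ℂ (sInt h σ) (Hh h) := by
  intro ω₀ hω₀
  -- A locally bounded majorant of the `ω`-derivative `2z / (λ - z²)²` of the kernel.
  let b : ℂ → ℝ := fun ω => ‖2 * (ω + I * (h:ℂ))‖ * (kerWt h ω * kerWt h ω)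
  have hb : ContinuousAt b ω₀ := by
    have hc : ContinuousAt (kerWt h) ω₀ :=
      (continuousOn_kerWt h).continuousAt ((isOpen_Hh h).mem_nhds hω₀)
    exact ContinuousAt.mul (by fun_prop) (hc.mul hc)
  have hnear : {ω | ω ∈ Hh h ∧ b ω ≤ b ω₀ + 1} ∈ 𝓝 ω₀ := by
    filter_upwards [(isOpen_Hh h).mem_nhds hω₀, hb.eventually (gt_mem_nhds (lt_add_one _))]
      with ω h1 h2 using ⟨h1, h2.le⟩
  have key := hasDerivAt_integral_of_dominated_loc_of_deriv_le (μ := σ.restrict (Ici 0))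
    (F := fun (ω : ℂ) (l : ℝ) => ((l : ℂ) - (ω + I * (h:ℂ)) ^ 2)⁻¹)
    (F' := fun (ω : ℂ) (l : ℝ) =>
      2 * (ω + I * (h:ℂ)) * (((l : ℂ) - (ω + I * (h:ℂ)) ^ 2)⁻¹
        * ((l : ℂ) - (ω + I * (h:ℂ)) ^ 2)⁻¹))
    (bound := fun l => (b ω₀ + 1) * (1 / (l + 1))) hnear
    (Eventually.of_forall fun ω => (measurable_ker h ω).aestronglyMeasurable)
    (integrable_ker hσ hω₀)
    (((measurable_ker h ω₀).mul (measurable_ker h ω₀)).const_mul _).aestronglyMeasurable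
    ?_ ((integrable_base hσ).1.const_mul _) ?_
  · exact key.2.differentiableAt.differentiableWithinAt
  · filter_upwards [ae_restrict_mem measurableSet_Ici] with l hl ω hω
    have hl : (0:ℝ) ≤ l := hl
    rw [norm_mul, norm_mul (_⁻¹)]
    calc _ ≤ ‖2 * (ω + I * (h:ℂ))‖ *
          ((kerWt h ω * (1 / (l + 1))) * (kerWt h ω * (1 / (l + 1)))) := by
          refine mul_le_mul_of_nonneg_left ?_ (norm_nonneg _)
          exact mul_le_mul (norm_ker_le hl hω.1) (norm_ker_le hl hω.1) (norm_nonneg _)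
            (mul_nonneg (kerWt_nonneg _ _) (by positivity))
      _ = b ω * ((1 / (l + 1)) * (1 / (l + 1))) := by simp only [b]; ring
      _ ≤ (b ω₀ + 1) * (1 / (l + 1)) := by
          refine mul_le_mul hω.2 (one_div_sq_le hl) (by positivity) ?_
          have : 0 ≤ b ω₀ := mul_nonneg (norm_nonneg _)
            (mul_nonneg (kerWt_nonneg _ _) (kerWt_nonneg _ _))
          linarith
  · filter_upwards [ae_restrict_mem measurableSet_Ici] with l hl ω hω
    have hne := ker_ne_zero (l := l) hl hω.1
    have h1 : HasDerivAt (fun ω : ℂ => (l : ℂ) - (ω + I * (h:ℂ)) ^ 2)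
        (-(2 * (ω + I * (h:ℂ)))) ω := by
      have := (((hasDerivAt_id ω).add_const (I * (h:ℂ))).pow 2).const_sub (l : ℂ)
      simpa using this
    have h2 := h1.fun_inv hne
    rw [neg_neg, div_eq_mul_inv, sq (_ - _), mul_inv] at h2
    exact h2

/-! ### The a priori bound from the `L²(0,1)` norm -/

/-- For real `x`, the real functional `w ↦ Re w + (x/h) Im w` maps the kernel `(λ - z²)⁻¹`,
`z = x + ih`, to `(λ + |z|²) / |λ - z²|² ≥ 1 / (λ + |z|²)`; and `|z|² ≤ 1 + h²` for `x ∈ (0,1)`. -/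
lemma ker_lower {h x l : ℝ} (hh : 0 < h) (hx0 : 0 < x) (hx1 : x < 1) (hl : 0 ≤ l) :
    (1 + h ^ 2)⁻¹ * (1 / (l + 1)) ≤ (((l : ℂ) - ((x:ℂ) + I * (h:ℂ)) ^ 2)⁻¹).re
      + x / h * (((l : ℂ) - ((x:ℂ) + I * (h:ℂ)) ^ 2)⁻¹).im := by
  have e : (l : ℂ) - ((x:ℂ) + I * (h:ℂ)) ^ 2
      = ((l - x ^ 2 + h ^ 2 : ℝ) : ℂ) + ((-(2 * x * h) : ℝ) : ℂ) * I := by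
    apply Complex.ext <;> simp [sq] <;> ring
  have hn : Complex.normSq (((l - x ^ 2 + h ^ 2 : ℝ) : ℂ) + ((-(2 * x * h) : ℝ) : ℂ) * I)
      = (l - x ^ 2 + h ^ 2) ^ 2 + (2 * x * h) ^ 2 := by
    rw [Complex.normSq_add_mul_I]; ring
  rw [e, Complex.inv_re, Complex.inv_im, hn]
  simp only [Complex.add_re, Complex.add_im, Complex.ofReal_re, Complex.ofReal_im,
    Complex.mul_re, Complex.mul_im, Complex.I_re, Complex.I_im, mul_zero, mul_one, sub_zero,
    add_zero, zero_add, neg_neg]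
  have hD : 0 < (l - x ^ 2 + h ^ 2) ^ 2 + (2 * x * h) ^ 2 := by positivity
  have e2 : (l - x ^ 2 + h ^ 2) / ((l - x ^ 2 + h ^ 2) ^ 2 + (2 * x * h) ^ 2)
      + x / h * (2 * x * h / ((l - x ^ 2 + h ^ 2) ^ 2 + (2 * x * h) ^ 2))
      = (l + (x ^ 2 + h ^ 2)) / ((l - x ^ 2 + h ^ 2) ^ 2 + (2 * x * h) ^ 2) := by
    field_simp
    ring
  have hx2 : x ^ 2 ≤ 1 := by nlinarith
  have hs : 0 < l + (x ^ 2 + h ^ 2) := by positivity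
  have h1 : l + (x ^ 2 + h ^ 2) ≤ (1 + h ^ 2) * (l + 1) := by nlinarith [mul_nonneg hl (sq_nonneg h)]
  have h2 : (l - x ^ 2 + h ^ 2) ^ 2 + (2 * x * h) ^ 2 ≤ (l + (x ^ 2 + h ^ 2)) ^ 2 := by
    nlinarith [mul_nonneg hl (sq_nonneg x)]
  calc _ = 1 / ((1 + h ^ 2) * (l + 1)) := by field_simp
    _ ≤ 1 / (l + (x ^ 2 + h ^ 2)) := one_div_le_one_div_of_le hs h1
    _ ≤ _ := by
      rw [e2, div_le_div_iff₀ hs hD]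
      linarith

lemma lower_bound {h : ℝ} (hh : 0 < h) {f : ℂ → ℂ} {ρ : ℝ} {σ : Measure ℝ} (hρ : 0 ≤ ρ)
    (hσ : FinCond σ) (hf : ∀ ω ∈ Hh h, f ω = (ρ : ℂ) + sInt h σ ω) {x : ℝ} (hx : x ∈ Ioo (0:ℝ) 1) :
    (ρ + starNorm σ) ≤ ((1 + h ^ 2) * (1 + 1 / h)) * ‖f x‖ := by
  obtain ⟨hx0, hx1⟩ := hx
  have hmem : (x : ℂ) ∈ Hh h := by simp [Hh, hh]
  have hi := integrable_ker hσ hmem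
  have hre : (sInt h σ x).re
      = ∫ l in Ici (0:ℝ), (((l : ℂ) - ((x:ℂ) + I * (h:ℂ)) ^ 2)⁻¹).re ∂σ :=
    (integral_re hi).symm
  have him : (sInt h σ x).im
      = ∫ l in Ici (0:ℝ), (((l : ℂ) - ((x:ℂ) + I * (h:ℂ)) ^ 2)⁻¹).im ∂σ :=
    (integral_im hi).symm
  have hire : Integrable (fun l : ℝ => (((l : ℂ) - ((x:ℂ) + I * (h:ℂ)) ^ 2)⁻¹).re)
      (σ.restrict (Ici 0)) := hi.re
  have hiim : Integrable (fun l : ℝ => (((l : ℂ) - ((x:ℂ) + I * (h:ℂ)) ^ 2)⁻¹).im)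
      (σ.restrict (Ici 0)) := hi.im
  have h1 : (1 + h ^ 2)⁻¹ * starNorm σ ≤ (sInt h σ x).re + x / h * (sInt h σ x).im := by
    rw [hre, him, ← integral_const_mul, ← integral_add hire (hiim.const_mul _),
      ← (integrable_base hσ).2, ← integral_const_mul]
    refine integral_mono_ae ((integrable_base hσ).1.const_mul _)
      (hire.add (hiim.const_mul _)) ?_
    filter_upwards [ae_restrict_mem measurableSet_Ici] with l hl
    exact ker_lower hh hx0 hx1 hl
  have h2 : (f x).re + x / h * (f x).im = ρ + ((sInt h σ x).re + x / h * (sInt h σ x).im) := by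
    rw [hf x hmem]; simp; ring
  have h3 : (f x).re + x / h * (f x).im ≤ (1 + 1 / h) * ‖f x‖ := by
    have a1 := Complex.re_le_norm (f x)
    have a2 := (le_abs_self _).trans (Complex.abs_im_le_norm (f x))
    have a3 : x / h ≤ 1 / h := by gcongr
    have a4 : x / h * (f x).im ≤ 1 / h * ‖f x‖ :=
      (mul_le_mul_of_nonneg_left a2 (by positivity)).trans
        (mul_le_mul_of_nonneg_right a3 (norm_nonneg _))
    linarith
  have h4 : ρ ≤ (1 + h ^ 2) * ρ := by nlinarith [mul_nonneg hρ (sq_nonneg h)]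
  have h5 : starNorm σ ≤ (1 + h ^ 2) * ((sInt h σ x).re + x / h * (sInt h σ x).im) := by
    rwa [inv_mul_le_iff₀ (by positivity)] at h1
  calc _ ≤ (1 + h ^ 2) * ((f x).re + x / h * (f x).im) := by rw [h2]; linarith
    _ ≤ _ := by rw [mul_assoc]; exact mul_le_mul_of_nonneg_left h3 (by positivity)

lemma differentiableOn_of_rep {h : ℝ} {f : ℂ → ℂ} {ρ : ℝ} {σ : Measure ℝ}
    (hσ : FinCond σ) (hf : ∀ ω ∈ Hh h, f ω = (ρ : ℂ) + sInt h σ ω) :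
    DifferentiableOn ℂ f (Hh h) :=
  ((differentiableOn_sInt hσ).const_add _).congr hf

/-- The `L²(0,1)` norm controls the representing data `ρ + ‖σ‖_*`. -/
lemma data_le {h : ℝ} (hh : 0 < h) {M : ℝ} {f : ℂ → ℂ} {ρ : ℝ} {σ : Measure ℝ} (hρ : 0 ≤ ρ)
    (hσ : FinCond σ) (hf : ∀ ω ∈ Hh h, f ω = (ρ : ℂ) + sInt h σ ω) (hM : L2norm01 f ≤ M) :
    ρ + starNorm σ ≤ ((1 + h ^ 2) * (1 + 1 / h)) * M := by
  set C := (1 + h ^ 2) * (1 + 1 / h) with hC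
  have hCpos : 0 < C := by positivity
  have hN : 0 ≤ (ρ + starNorm σ) / C := div_nonneg (add_nonneg hρ ENNReal.toReal_nonneg) hCpos.le
  have hcont : ContinuousOn (fun x : ℝ => ‖f x‖ ^ 2) (Icc 0 1) := by
    refine ((differentiableOn_of_rep hσ hf).continuousOn.comp
      Complex.continuous_ofReal.continuousOn ?_).norm.pow 2
    intro x _
    simp [Hh, hh]
  have hint : IntegrableOn (fun x : ℝ => ‖f x‖ ^ 2) (Ioo 0 1) :=
    (hcont.integrableOn_compact isCompact_Icc).mono_set Ioo_subset_Icc_self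
  have h1 : ((ρ + starNorm σ) / C) ^ 2 ≤ ∫ x in Ioo (0:ℝ) 1, ‖f (x:ℂ)‖ ^ 2 := by
    have : ∫ _ in Ioo (0:ℝ) 1, ((ρ + starNorm σ) / C) ^ 2 = ((ρ + starNorm σ) / C) ^ 2 := by
      simp
    rw [← this]
    refine setIntegral_mono_on (by simp) hint measurableSet_Ioo ?_
    intro x hx
    refine pow_le_pow_left₀ hN ?_ 2
    rw [div_le_iff₀' hCpos]
    exact lower_bound hh hρ hσ hf hx
  have h2 : (ρ + starNorm σ) / C ≤ M := (Real.le_sqrt_of_sq_le h1).trans hM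
  rwa [div_le_iff₀' hCpos] at h2

/-! ### Compactness -/

lemma equicontinuousAt_of_modulus {X ι : Type*} [TopologicalSpace X] {L : X → X → ℝ}
    (hL : ∀ x, Tendsto (L x) (𝓝 x) (𝓝 0)) (G : ι → X → ℂ)
    (hG : ∀ i x y, ‖G i x - G i y‖ ≤ L x y) (x₀ : X) : EquicontinuousAt G x₀ :=
  Metric.equicontinuousAt_of_continuity_modulus (L x₀) (hL x₀) G
    (Eventually.of_forall fun y i => by rw [dist_eq_norm]; exact hG i x₀ y)

/-- Arzelà–Ascoli for the set of functions with a prescribed pointwise bound `D` and a prescribed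
modulus of continuity `L`; this set is closed under pointwise limits. -/
lemma isCompact_of_modulus {X : Type*} [TopologicalSpace X] (D : X → ℝ) (L : X → X → ℝ)
    (hL : ∀ x, Tendsto (L x) (𝓝 x) (𝓝 0)) :
    IsCompact {f : C(X, ℂ) | (∀ x, ‖f x‖ ≤ D x) ∧ ∀ x y, ‖f x - f y‖ ≤ L x y} := by
  apply ArzelaAscoli.isCompact_of_equicontinuous
  · have himg : (ContinuousMap.toFun ''
        {f : C(X, ℂ) | (∀ x, ‖f x‖ ≤ D x) ∧ ∀ x y, ‖f x - f y‖ ≤ L x y})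
        = (Set.univ.pi fun x => Metric.closedBall (0:ℂ) (D x)) ∩
          {g : X → ℂ | ∀ x y, ‖g x - g y‖ ≤ L x y} := by
      ext g
      constructor
      · rintro ⟨f, ⟨h1, h2⟩, rfl⟩
        exact ⟨fun x _ => by simpa using h1 x, h2⟩
      · rintro ⟨h1, h2⟩
        have hc : Continuous g := continuous_iff_continuousAt.2 fun x =>
          (equicontinuousAt_of_modulus hL (fun _ : Unit => g) (fun _ => h2) x).continuousAt ()
        exact ⟨⟨g, hc⟩, ⟨fun x => by simpa using h1 x (mem_univ x), h2⟩, rfl⟩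
    rw [himg]
    refine (isCompact_univ_pi fun x => isCompact_closedBall _ _).inter_right ?_
    simp only [ofPred_forall]
    exact isClosed_iInter fun x => isClosed_iInter fun y =>
      isClosed_le (by fun_prop) continuous_const
  · exact equicontinuousAt_of_modulus hL _ fun i => i.2.2

/-- For any `M > 0` the family `S_h^M = {f ∈ S_h : ‖f‖_{L²(0,1)} ≤ M}` is
normal: every sequence in it has a subsequence converging uniformly on compact subsets of
`ℍ_h` to an analytic function. -/
theorem ShM_normal_family (h : ℝ) (hh : 0 < h) (M : ℝ) (hM : 0 < M)
    (F : ℕ → ℂ → ℂ) (hF : ∀ n, MemS h (F n)) (hbd : ∀ n, L2norm01 (F n) ≤ M) :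
    ∃ (g : ℂ → ℂ) (φ : ℕ → ℕ), StrictMono φ ∧ DifferentiableOn ℂ g (Hh h) ∧
      ∀ K ⊆ Hh h, IsCompact K → TendstoUniformlyOn (fun n => F (φ n)) g atTop K := by
  have hopen := isOpen_Hh h
  set C := ((1 + h ^ 2) * (1 + 1 / h)) * M
  choose ρ σ hρ hσ hf using hF
  have hdata : ∀ n, ρ n + starNorm (σ n) ≤ C := fun n =>
    data_le hh (hρ n) (hσ n) (hf n) (hbd n)
  have hstar : ∀ n, 0 ≤ starNorm (σ n) := fun n => ENNReal.toReal_nonneg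
  have hdiff : ∀ n, DifferentiableOn ℂ (F n) (Hh h) := fun n =>
    differentiableOn_of_rep (hσ n) (hf n)
  have : LocallyCompactSpace (Hh h) := hopen.locallyCompactSpace
  have hcomp := isCompact_of_modulus (X := Hh h) (fun x => (1 + kerWt h x) * C)
    (fun x y => kerMod h x y * C) (by
      intro x
      have hw : Continuous fun y : Hh h => kerWt h y :=
        continuousOn_iff_continuous_domRestrict.1 (continuousOn_kerWt h)
      have hc : Continuous fun y : Hh h => kerMod h x y * C := by
        unfold kerMod
        exact (Continuous.mul (by fun_prop) (continuous_const.mul hw)).mul continuous_const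
      have := hc.tendsto x
      simpa [kerMod] using this)
  let f : ℕ → C(Hh h, ℂ) := fun n =>
    ⟨fun x => F n x, continuousOn_iff_continuous_domRestrict.1 (hdiff n).continuousOn⟩
  obtain ⟨G, -, φ, hφ, hlim⟩ := hcomp.tendsto_subseq (x := f) (by
    intro n
    refine ⟨fun x => ?_, fun x y => ?_⟩
    · change ‖F n x‖ ≤ _
      rw [hf n x x.2]
      have h1 := norm_sInt_le (hσ n) x.2
      have h2 : ‖((ρ n : ℝ) : ℂ)‖ = ρ n := by
        rw [Complex.norm_real, Real.norm_of_nonneg (hρ n)]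
      have h3 : kerWt h x * starNorm (σ n) ≤ kerWt h x * C :=
        mul_le_mul_of_nonneg_left (by linarith [hdata n, hρ n]) (kerWt_nonneg _ _)
      calc _ ≤ _ := norm_add_le _ _
        _ ≤ C + kerWt h x * C := by linarith [hdata n, hstar n]
        _ = _ := by ring
    · change ‖F n x - F n y‖ ≤ _
      rw [hf n x x.2, hf n y y.2, add_sub_add_left_eq_sub]
      refine (norm_sInt_sub_le (hσ n) x.2 y.2).trans (mul_le_mul_of_nonneg_left ?_ ?_)
      · linarith [hdata n, hρ n]
      · exact mul_nonneg (norm_nonneg _) (mul_nonneg (kerWt_nonneg _ _) (kerWt_nonneg _ _)))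
  classical
  -- Extension by zero of the limit; only its values on the half-plane matter.
  let g : ℂ → ℂ := fun ω => if hω : ω ∈ Hh h then G ⟨ω, hω⟩ else 0
  have hunif : ∀ K ⊆ Hh h, IsCompact K → TendstoUniformlyOn (fun n => F (φ n)) g atTop K := by
    intro K hK hKc
    have hKc' : IsCompact ((↑) ⁻¹' K : Set (Hh h)) :=
      Topology.IsInducing.subtypeVal.isCompact_preimage' hKc (by simpa using hK)
    have := (ContinuousMap.tendsto_iff_forall_isCompact_tendstoUniformlyOn.1 hlim) _ hKc'
    rw [Metric.tendstoUniformlyOn_iff] at this ⊢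
    intro ε hε
    filter_upwards [this ε hε] with n hn x hx
    have := hn ⟨x, hK hx⟩ hx
    simp only [g, dif_pos (hK hx)]
    exact this
  refine ⟨g, φ, hφ, ?_, hunif⟩
  have hloc : TendstoLocallyUniformlyOn (fun n => F (φ n)) g atTop (Hh h) :=
    (tendstoLocallyUniformlyOn_iff_forall_isCompact hopen).2 hunif
  exact hloc.differentiableOn (Eventually.of_forall fun n => hdiff (φ n)) hopen
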